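/- Let (x,y) ∈ V with P(x,y) ≠ 0. If P(x,y) is a square in Fˣ, then the G-orbit of (x,y) has cardinality q³(q+1)(q²−1)²/2 and the stabilizer of (x,y) in G has cardinality 2(q−1)⁴; if P(x,y) is a nonsquare in Fˣ, then the G-orbit of (x,y) has cardinality q³(q−1)³(q²−1)/2 and the stabilizer of (x,y) in G has cardinality 2(q²−1)². -/

import Mathlib

open Matrix

/-- `2 × 2` matrices over `F`. -/
abbrev M2 (F : Type*) := Matrix (Fin 2) (Fin 2) F

/-- The right action of `G = GL₂(F) × GL₂(F) × GL₂(F)` on `V = M₂(F) × M₂(F)`. -/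
noncomputable def act {F : Type*} [Field F] (v : M2 F × M2 F)
    (g : GL (Fin 2) F × GL (Fin 2) F × GL (Fin 2) F) : M2 F × M2 F :=
  ((((g.2.2 : M2 F) 0 0) • (((g.1⁻¹ : GL (Fin 2) F) : M2 F) * v.1 * (g.2.1 : M2 F)) +
      ((g.2.2 : M2 F) 1 0) • (((g.1⁻¹ : GL (Fin 2) F) : M2 F) * v.2 * (g.2.1 : M2 F))),
   (((g.2.2 : M2 F) 0 1) • (((g.1⁻¹ : GL (Fin 2) F) : M2 F) * v.1 * (g.2.1 : M2 F)) +
      ((g.2.2 : M2 F) 1 1) • (((g.1⁻¹ : GL (Fin 2) F) : M2 F) * v.2 * (g.2.1 : M2 F))))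

/-- `P₀(x,y) = x·y^ι − y·x^ι`, where `m^ι` is the adjugate. -/
def P0 {F : Type*} [Field F] (v : M2 F × M2 F) : M2 F :=
  v.1 * v.2.adjugate - v.2 * v.1.adjugate

/-- The fundamental relative invariant `P(x,y) = −det(P₀(x,y))`. -/
def Pinv {F : Type*} [Field F] (v : M2 F × M2 F) : F := - (P0 v).det

/-- The `G`-orbit of a point of `V`. -/
noncomputable def orbit {F : Type*} [Field F] (v : M2 F × M2 F) : Set (M2 F × M2 F) :=
  {w | ∃ g : GL (Fin 2) F × GL (Fin 2) F × GL (Fin 2) F, act v g = w}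

/-- The stabilizer of a point of `V` in `G`. -/
noncomputable def stab {F : Type*} [Field F] (v : M2 F × M2 F) :
    Set (GL (Fin 2) F × GL (Fin 2) F × GL (Fin 2) F) :=
  {g | act v g = v}

/-!
A point of `V` with `P ≠ 0` can be moved within its orbit to the multiplication table of a quadratic
algebra `A = F[ω]`, `ω² = a + b ω`, and there `P` is the discriminant `b² + 4 a`. An element of `G`
stabilizes the table exactly when it is an autotopism of `A`, that is, a triple of linear
automorphisms with `f (x * y) = h x * g y`. Evaluating at `x = 1` and at `y = 1` shows that every
autotopism has the form `(u v σ, v σ, u σ)` with units `u`, `v` and an algebra automorphism `σ`.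
There are only two such `σ`, the identity and conjugation, so the stabilizer has `2 |Aˣ|²` elements.
Finally `A` is `F × F` if `P` is a square and the quadratic extension field if it is not, and the
size of the orbit follows by orbit–stabilizer.
-/

section Action

variable {F : Type*} [Field F]

theorem act_one (v : M2 F × M2 F) : act v 1 = v := by
  simp [act]

theorem act_mul (v : M2 F × M2 F) (g h : GL (Fin 2) F × GL (Fin 2) F × GL (Fin 2) F) :
    act v (g * h) = act (act v g) h := by
  ext i j <;>
    simp only [act, Prod.fst_mul, Prod.snd_mul, _root_.mul_inv_rev, Units.val_mul, mul_apply,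
      Fin.sum_univ_two, Matrix.add_apply, Matrix.smul_apply, smul_eq_mul] <;>
    ring

/-- The right action `act` as an action of the opposite group. -/
noncomputable instance :
    MulAction (GL (Fin 2) F × GL (Fin 2) F × GL (Fin 2) F)ᵐᵒᵖ (M2 F × M2 F) where
  smul g v := act v g.unop
  one_smul v := act_one v
  mul_smul g h v := act_mul v h.unop g.unop

theorem orbit_eq_mulAction_orbit (v : M2 F × M2 F) :
    orbit v = MulAction.orbit (GL (Fin 2) F × GL (Fin 2) F × GL (Fin 2) F)ᵐᵒᵖ v :=
  Set.ext fun _ ↦ MulOpposite.opEquiv.exists_congr_left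

theorem card_stab_eq_card_stabilizer (v : M2 F × M2 F) :
    Nat.card (stab v) =
      Nat.card (MulAction.stabilizer (GL (Fin 2) F × GL (Fin 2) F × GL (Fin 2) F)ᵐᵒᵖ v) :=
  Nat.card_congr (MulOpposite.opEquiv.subtypeEquiv fun _ ↦ Iff.rfl)

theorem card_orbit_mul_card_stab (v : M2 F × M2 F) :
    Nat.card (orbit v) * Nat.card (stab v) = Nat.card (GL (Fin 2) F) ^ 3 := by
  rw [orbit_eq_mulAction_orbit, card_stab_eq_card_stabilizer, ← Nat.card_prod,
    Nat.card_congr (MulAction.orbitProdStabilizerEquivGroup _ v),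
    ← Nat.card_congr MulOpposite.opEquiv, Nat.card_prod, Nat.card_prod]
  ring

theorem card_stab_eq_of_mem_orbit {v w : M2 F × M2 F} (h : w ∈ orbit v) :
    Nat.card (stab w) = Nat.card (stab v) := by
  obtain ⟨g, rfl⟩ := h
  rw [card_stab_eq_card_stabilizer, card_stab_eq_card_stabilizer]
  exact (Nat.card_congr
    (MulAction.stabilizerEquivStabilizer (g := MulOpposite.op g) rfl).toEquiv).symm

theorem mem_orbit_trans {u v w : M2 F × M2 F} (huv : v ∈ orbit u) (hvw : w ∈ orbit v) :
    w ∈ orbit u := by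
  obtain ⟨g, rfl⟩ := huv
  obtain ⟨h, rfl⟩ := hvw
  exact ⟨g * h, act_mul u g h⟩

end Action

section Invariant

variable {F : Type*} [Field F]

theorem P0_mul_mul (h k : M2 F) (v : M2 F × M2 F) :
    P0 (h * v.1 * k, h * v.2 * k) = k.det • (h * P0 v * h.adjugate) := by
  have twisted_mul (x y : M2 F) :
      h * x * k * (h * y * k).adjugate = k.det • (h * (x * y.adjugate) * h.adjugate) :=
    calc
      h * x * k * (h * y * k).adjugate = h * x * (k * k.adjugate) * (y.adjugate * h.adjugate) := by
        simp only [adjugate_mul_distrib, Matrix.mul_assoc]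
      _ = k.det • (h * (x * y.adjugate) * h.adjugate) := by
        simp only [mul_adjugate, Matrix.mul_smul, Matrix.smul_mul, Matrix.mul_one,
          Matrix.mul_assoc]
  simp only [P0, twisted_mul, Matrix.mul_sub, Matrix.sub_mul, smul_sub]

theorem P0_linearCombination (a b c d : F) (v : M2 F × M2 F) :
    P0 (a • v.1 + c • v.2, b • v.1 + d • v.2) = (a * d - b * c) • P0 v := by
  ext i j
  simp only [P0, mul_apply, adjugate_fin_two, Fin.sum_univ_two, Matrix.add_apply, Matrix.sub_apply,
    Matrix.smul_apply, smul_eq_mul]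
  fin_cases i <;> fin_cases j <;> simp <;> ring

theorem Pinv_act (v : M2 F × M2 F) (g : GL (Fin 2) F × GL (Fin 2) F × GL (Fin 2) F) :
    Pinv (act v g) = (g.1⁻¹.det * g.2.1.det * g.2.2.det : Fˣ) ^ 2 * Pinv v := by
  simp only [act, Pinv]
  rw [P0_linearCombination _ _ _ _ (_, _), P0_mul_mul]
  simp only [det_smul, det_mul, det_adjugate, Fintype.card_fin, Units.val_mul,
    GeneralLinearGroup.val_det_apply, det_fin_two g.2.2.val]
  ring

theorem Pinv_ne_zero_of_mem_orbit {v w : M2 F × M2 F} (h : w ∈ orbit v) (hv : Pinv v ≠ 0) :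
    Pinv w ≠ 0 := by
  obtain ⟨g, rfl⟩ := h
  rw [Pinv_act]
  exact mul_ne_zero (pow_ne_zero 2 (Units.ne_zero _)) hv

theorem isSquare_Pinv_iff_of_mem_orbit {v w : M2 F × M2 F} (h : w ∈ orbit v) :
    IsSquare (Pinv w) ↔ IsSquare (Pinv v) := by
  obtain ⟨g, rfl⟩ := h
  rw [Pinv_act]
  constructor
  · rintro ⟨r, hr⟩
    refine ⟨r / (g.1⁻¹.det * g.2.1.det * g.2.2.det : Fˣ), ?_⟩
    rw [div_mul_div_comm, ← hr, ← sq, mul_div_cancel_left₀ _ (pow_ne_zero 2 (Units.ne_zero _))]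
  · exact (IsSquare.sq _).mul

theorem Pinv_eq_det_add (v : M2 F × M2 F) :
    Pinv v = ((v.1 + v.2).det - v.1.det - v.2.det) ^ 2 - 4 * v.1.det * v.2.det := by
  simp [Pinv, P0, det_fin_two, adjugate_fin_two, mul_apply, Fin.sum_univ_two]
  ring

theorem Pinv_one_left (y : M2 F) : Pinv (1, y) = y.discr := by
  rw [Pinv_eq_det_add, discr_fin_two, trace_fin_two]
  simp [det_fin_two]
  ring

end Invariant

section Autotopism

variable (R A : Type*) [CommSemiring R] [CommSemiring A] [Algebra R A]

/-- The autotopisms of an algebra `A`: triples `(f, g, h)` of linear automorphisms of `A` with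
`f (x * y) = h x * g y`. The components are ordered so that, for the table of a multiplication,
they become elements `(g₁, g₂, g₃)` of its stabilizer. -/
abbrev Autotopism : Type _ :=
  {t : (A ≃ₗ[R] A) × (A ≃ₗ[R] A) × (A ≃ₗ[R] A) // ∀ x y, t.1 (x * y) = t.2.2 x * t.2.1 y}

variable {R A}

/-- The autotopism `(u * v * σ, v * σ, u * σ)` attached to an automorphism `σ` of the algebra
and two of its units `u` and `v`. -/
def autotopismOfUnits (s : (A ≃ₐ[R] A) × Aˣ × Aˣ) : Autotopism R A :=
  ⟨(s.1.toLinearEquiv ≪≫ₗ (s.2.1 * s.2.2).mulLeftLinearEquiv R A,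
    s.1.toLinearEquiv ≪≫ₗ s.2.2.mulLeftLinearEquiv R A,
    s.1.toLinearEquiv ≪≫ₗ s.2.1.mulLeftLinearEquiv R A), fun x y ↦ by
      simp [mul_assoc, mul_left_comm]⟩

theorem autotopismOfUnits_injective :
    Function.Injective (autotopismOfUnits : (A ≃ₐ[R] A) × Aˣ × Aˣ → Autotopism R A) := by
  rintro ⟨σ, u, v⟩ ⟨σ', u', v'⟩ h
  have hg (x : A) : v * σ x = v' * σ' x := LinearEquiv.congr_fun congr(($h).1.2.1) x
  have hh (x : A) : u * σ x = u' * σ' x := LinearEquiv.congr_fun congr(($h).1.2.2) x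
  obtain rfl : u = u' := Units.ext (by simpa using hh 1)
  obtain rfl : v = v' := Units.ext (by simpa using hg 1)
  obtain rfl : σ = σ' := AlgEquiv.ext fun x ↦ u.mul_right_inj.1 (hh x)
  rfl

theorem autotopismOfUnits_surjective :
    Function.Surjective (autotopismOfUnits : (A ≃ₐ[R] A) × Aˣ × Aˣ → Autotopism R A) := by
  rintro ⟨⟨f, g, h⟩, hfgh⟩
  obtain ⟨z, hz⟩ := f.surjective 1
  obtain ⟨u, hu⟩ : IsUnit (h 1) := .of_mul_eq_one (g z) (by rw [← hfgh, one_mul, hz])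
  obtain ⟨v, hv⟩ : IsUnit (g 1) := .of_mul_eq_one (h z) (by rw [mul_comm, ← hfgh, mul_one, hz])
  have hf_eq_g (x : A) : f x = u * g x := by rw [hu, ← hfgh, one_mul]
  have hf_eq_h (x : A) : f x = v * h x := by rw [hv, mul_comm, ← hfgh, mul_one]
  let σ : A ≃ₗ[R] A := g ≪≫ₗ v⁻¹.mulLeftLinearEquiv R A
  have hg (x : A) : g x = v * σ x := (v.mul_inv_cancel_left _).symm
  have hh (x : A) : h x = u * σ x := v.mul_right_inj.1 <| by
    simp only [← hf_eq_h, hf_eq_g, hg, mul_left_comm]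
  have hσ_one : σ 1 = 1 := v.mul_right_inj.1 <| by rw [← hg, ← hv, mul_one]
  have hσ_mul (x y : A) : σ (x * y) = σ x * σ y := (u * v).mul_right_inj.1 <| by
    simp only [Units.val_mul, mul_assoc, ← hg, ← hf_eq_g]
    rw [hfgh, hh, hg, mul_assoc, mul_left_comm (σ x)]
  refine ⟨(.ofLinearEquiv σ hσ_one hσ_mul, u, v), Subtype.ext (Prod.ext ?_ (Prod.ext ?_ ?_))⟩
  · exact LinearEquiv.ext fun x ↦ by simp [autotopismOfUnits, ← hg, hf_eq_g]
  · exact LinearEquiv.ext fun x ↦ (hg x).symm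
  · exact LinearEquiv.ext fun x ↦ (hh x).symm

theorem card_autotopism :
    Nat.card (Autotopism R A) = Nat.card (A ≃ₐ[R] A) * Nat.card Aˣ ^ 2 := by
  rw [← Nat.card_eq_of_bijective autotopismOfUnits
    ⟨autotopismOfUnits_injective, autotopismOfUnits_surjective⟩, Nat.card_prod, Nat.card_prod, sq]

end Autotopism

section MatrixOfBasis

variable {R n M : Type*} [CommRing R] [Fintype n] [DecidableEq n]

/-- An invertible matrix as a linear automorphism of the module with basis `b`. -/
noncomputable def glEquivLinearEquiv [AddCommGroup M] [Module R M] (b : Module.Basis n R M) :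
    GL n R ≃* (M ≃ₗ[R] M) :=
  (Units.mapEquiv (toLinAlgEquiv b).toMulEquiv).trans
    (LinearMap.GeneralLinearGroup.generalLinearEquiv R M)

theorem glEquivLinearEquiv_basis [AddCommGroup M] [Module R M] (b : Module.Basis n R M)
    (g : GL n R) (j : n) : glEquivLinearEquiv b g (b j) = ∑ i, g.val i j • b i :=
  toLinAlgEquiv_self b g.val j

theorem toLinAlgEquiv_leftMulMatrix [Ring M] [Algebra R M] (b : Module.Basis n R M) (x : M) :
    toLinAlgEquiv b (Algebra.leftMulMatrix b x) = LinearMap.mulLeft R x :=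
  (toLinAlgEquiv b).apply_symm_apply _

end MatrixOfBasis

section MulTable

variable {F A : Type*} [Field F] [CommRing A] [Algebra F A]

/-- The multiplication table of a two-dimensional algebra with basis `b`, as the point of `V`
formed by the matrices of multiplication by `b 0` and by `b 1`. -/
noncomputable def mulTable (b : Module.Basis (Fin 2) F A) : M2 F × M2 F :=
  (Algebra.leftMulMatrix b (b 0), Algebra.leftMulMatrix b (b 1))

theorem linearCombination_mul_mul_eq_iff (b : Module.Basis (Fin 2) F A)
    (g : GL (Fin 2) F × GL (Fin 2) F × GL (Fin 2) F) (i : Fin 2) :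
    g.2.2.val 0 i • ((g.1⁻¹).val * (mulTable b).1 * g.2.1.val) +
        g.2.2.val 1 i • ((g.1⁻¹).val * (mulTable b).2 * g.2.1.val) =
      Algebra.leftMulMatrix b (b i) ↔
    ∀ y, glEquivLinearEquiv b g.1 (b i * y) =
      glEquivLinearEquiv b g.2.2 (b i) * glEquivLinearEquiv b g.2.1 y := by
  calc
    _ ↔ (g.1⁻¹).val * (Algebra.leftMulMatrix b (glEquivLinearEquiv b g.2.2 (b i)) * g.2.1.val) =
          Algebra.leftMulMatrix b (b i) := by
      simp only [mulTable, glEquivLinearEquiv_basis, Fin.sum_univ_two, map_add, map_smul,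
        Matrix.add_mul, Matrix.mul_add, Matrix.smul_mul, Matrix.mul_smul, Matrix.mul_assoc]
    _ ↔ g.1.val * Algebra.leftMulMatrix b (b i) =
          Algebra.leftMulMatrix b (glEquivLinearEquiv b g.2.2 (b i)) * g.2.1.val := by
      rw [Units.inv_mul_eq_iff_eq_mul, eq_comm]
    _ ↔ _ := by
      rw [← (toLinAlgEquiv b).injective.eq_iff, map_mul, map_mul, toLinAlgEquiv_leftMulMatrix,
        toLinAlgEquiv_leftMulMatrix]
      exact LinearMap.ext_iff

theorem mem_stab_mulTable_iff (b : Module.Basis (Fin 2) F A)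
    (g : GL (Fin 2) F × GL (Fin 2) F × GL (Fin 2) F) :
    g ∈ stab (mulTable b) ↔ ∀ x y, glEquivLinearEquiv b g.1 (x * y) =
      glEquivLinearEquiv b g.2.2 x * glEquivLinearEquiv b g.2.1 y := by
  calc
    _ ↔ ∀ i y, glEquivLinearEquiv b g.1 (b i * y) =
          glEquivLinearEquiv b g.2.2 (b i) * glEquivLinearEquiv b g.2.1 y := by
      rw [Fin.forall_fin_two, ← linearCombination_mul_mul_eq_iff,
        ← linearCombination_mul_mul_eq_iff]
      exact Prod.ext_iff
    _ ↔ _ := by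
      refine ⟨fun h x y ↦ ?_, fun h i ↦ h (b i)⟩
      have linear_in_left : (glEquivLinearEquiv b g.1).toLinearMap ∘ₗ LinearMap.mulRight F y =
          LinearMap.mulRight F (glEquivLinearEquiv b g.2.1 y) ∘ₗ glEquivLinearEquiv b g.2.2 :=
        b.ext fun i ↦ h i y
      exact LinearMap.congr_fun linear_in_left x

theorem card_stab_mulTable (b : Module.Basis (Fin 2) F A) :
    Nat.card (stab (mulTable b)) = Nat.card (A ≃ₐ[F] A) * Nat.card Aˣ ^ 2 := by
  let φ := (glEquivLinearEquiv b).toEquiv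
  rw [← card_autotopism]
  exact Nat.card_congr <| (φ.prodCongr (φ.prodCongr φ)).subtypeEquiv (mem_stab_mulTable_iff b)

end MulTable

section QuadraticAlgebra

open scoped QuadraticAlgebra

theorem basis_quadraticAlgebra_zero {R : Type*} [CommRing R] (a b : R) :
    QuadraticAlgebra.basis a b 0 = 1 :=
  (QuadraticAlgebra.basis a b).repr.injective <| by
    ext i; fin_cases i <;> simp [QuadraticAlgebra.basis_repr_apply]

theorem basis_quadraticAlgebra_one {R : Type*} [CommRing R] (a b : R) :
    QuadraticAlgebra.basis a b 1 = ω :=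
  (QuadraticAlgebra.basis a b).repr.injective <| by
    ext i; fin_cases i <;> simp [QuadraticAlgebra.basis_repr_apply]

theorem mulTable_quadraticAlgebra_basis {F : Type*} [Field F] (a b : F) :
    mulTable (QuadraticAlgebra.basis a b) = (1, !![0, a; 1, b]) := by
  rw [mulTable, basis_quadraticAlgebra_zero, basis_quadraticAlgebra_one, map_one]
  congr 1
  ext i j
  rw [Algebra.leftMulMatrix_eq_repr_mul]
  fin_cases i <;> fin_cases j <;>
    simp [QuadraticAlgebra.basis_repr_apply, basis_quadraticAlgebra_zero,
      basis_quadraticAlgebra_one]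

section Automorphisms

variable {R : Type*} [CommRing R]

/-- Conjugation `ω ↦ b - ω` as an automorphism of the algebra `R[ω]` with `ω² = a + b ω`. -/
def quadraticConj (a b : R) : QuadraticAlgebra R a b ≃ₐ[R] QuadraticAlgebra R a b :=
  .ofRingEquiv (f := starRingAut) fun r ↦ by ext <;> simp

variable {a b : R}

theorem im_algEquiv_omega_ne_zero [Nontrivial R]
    (σ : QuadraticAlgebra R a b ≃ₐ[R] QuadraticAlgebra R a b) : (σ ω).im ≠ 0 := by
  intro him
  have hσω : σ ω = σ (algebraMap R _ (σ ω).re) := by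
    rw [AlgEquiv.commutes]
    ext <;> simp [him]
  simpa using congr(($(σ.injective hσω)).im)

theorem eq_omega_or_eq_star_omega [IsDomain R] (hab : b ^ 2 + 4 * a ≠ 0)
    {z : QuadraticAlgebra R a b} (hz : z * z = a • 1 + b • z) (him : z.im ≠ 0) :
    z = ω ∨ z = star ω := by
  have hre : z.re * z.re + a * z.im * z.im = a + b * z.re := by simpa using congr(($hz).re)
  have htrace : 2 * z.re + b * z.im = b := by
    have him_mul : z.re * z.im + z.im * z.re + b * z.im * z.im = b * z.im := by
      simpa using congr(($hz).im)
    exact mul_right_cancel₀ him (by linear_combination him_mul)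
  have him_sq : z.im ^ 2 = 1 := mul_left_cancel₀ hab <| by
    linear_combination 4 * hre + (b * z.im - 2 * z.re + b) * htrace
  have hre_mul : z.re * (z.re - b) = 0 := by linear_combination hre - a * him_sq
  suffices z.re = 0 ∧ z.im = 1 ∨ z.re = b ∧ z.im = -1 by
    simpa [QuadraticAlgebra.ext_iff]
  rcases eq_or_ne b 0 with hb | hb
  · have hre_zero : z.re = 0 := by simpa [hb] using hre_mul
    simpa [hre_zero, hb] using him_sq
  · refine (mul_eq_zero.1 hre_mul).imp (fun h ↦ ⟨h, ?_⟩) (fun h ↦ ⟨sub_eq_zero.1 h, ?_⟩) <;>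
      exact mul_left_cancel₀ hb (by linear_combination htrace - 2 * h)

theorem algEquiv_eq_refl_or_eq_quadraticConj [IsDomain R] (hab : b ^ 2 + 4 * a ≠ 0)
    (σ : QuadraticAlgebra R a b ≃ₐ[R] QuadraticAlgebra R a b) :
    σ = .refl ∨ σ = quadraticConj a b := by
  have hroot : σ ω * σ ω = a • 1 + b • σ ω := by
    rw [← map_mul, QuadraticAlgebra.omega_mul_omega_eq_add, map_add, map_smul, map_smul, map_one]
  refine (eq_omega_or_eq_star_omega hab hroot (im_algEquiv_omega_ne_zero σ)).imp ?_ ?_ <;>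
    exact fun h ↦ AlgEquiv.coe_toAlgHom_injective (QuadraticAlgebra.algHom_ext h)

theorem refl_ne_quadraticConj [Nontrivial R] (hab : b ^ 2 + 4 * a ≠ 0) :
    (.refl : QuadraticAlgebra R a b ≃ₐ[R] _) ≠ quadraticConj a b := by
  intro h
  have hω : (ω : QuadraticAlgebra R a b) = star ω := AlgEquiv.congr_fun h ω
  have hb : b = 0 := by simpa using congr(($hω).re).symm
  have h2 : (1 : R) = -1 := by simpa using congr(($hω).im)
  exact hab (by linear_combination 2 * a * h2 + b * hb)

theorem card_algEquiv_quadraticAlgebra [IsDomain R] (hab : b ^ 2 + 4 * a ≠ 0) :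
    Nat.card (QuadraticAlgebra R a b ≃ₐ[R] QuadraticAlgebra R a b) = 2 :=
  Nat.card_eq_two_iff.2 ⟨.refl, quadraticConj a b, refl_ne_quadraticConj hab,
    Set.eq_univ_of_forall (algEquiv_eq_refl_or_eq_quadraticConj hab)⟩

end Automorphisms

section Units

/-- Evaluation of `ω` at the two roots `r` and `s` of `X² - (r + s) X + r s`. -/
def splitQuadraticEquiv {F : Type*} [Field F] {r s : F} (hrs : r ≠ s) :
    QuadraticAlgebra F (-(r * s)) (r + s) ≃ₐ[F] F × F where
  toFun z := (z.re + r * z.im, z.re + s * z.im)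
  invFun w := ⟨(r * w.2 - s * w.1) / (r - s), (w.1 - w.2) / (r - s)⟩
  left_inv z := by
    have := sub_ne_zero.2 hrs
    ext <;> dsimp only <;> field_simp <;> ring
  right_inv w := by
    have := sub_ne_zero.2 hrs
    ext <;> dsimp only <;> field_simp <;> ring
  map_mul' z w := by
    ext <;> simp <;> ring
  map_add' z w := by
    ext <;> simp <;> ring
  commutes' c := by
    ext <;> simp

theorem card_units_quadraticAlgebra_of_roots {F : Type*} [Field F] {r s : F} (hrs : r ≠ s) :
    Nat.card (QuadraticAlgebra F (-(r * s)) (r + s))ˣ = Nat.card Fˣ ^ 2 := by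
  let φ := (Units.mapEquiv (splitQuadraticEquiv hrs).toMulEquiv).trans MulEquiv.prodUnits
  rw [Nat.card_congr φ.toEquiv, Nat.card_prod, sq]

theorem card_units_quadraticAlgebra_of_forall_ne {F : Type*} [Field F] [Finite F] {a b : F}
    (hab : ∀ r, r ^ 2 ≠ a + b * r) :
    Nat.card (QuadraticAlgebra F a b)ˣ = Nat.card F ^ 2 - 1 := by
  have : Fact (∀ r, r ^ 2 ≠ a + b * r) := ⟨hab⟩
  have : Finite (QuadraticAlgebra F a b) := .of_equiv _ (QuadraticAlgebra.equivProd a b).symm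
  rw [Nat.card_units, Nat.card_congr (QuadraticAlgebra.equivProd a b), Nat.card_prod, sq]

end Units

end QuadraticAlgebra

section NormalForm

variable {F : Type*} [Field F]

theorem linearCombination_mem_orbit {a b c d : F} (h : a * d - b * c ≠ 0) (v : M2 F × M2 F) :
    (a • v.1 + c • v.2, b • v.1 + d • v.2) ∈ orbit v :=
  ⟨(1, 1, .mkOfDetNeZero !![a, b; c, d] (by rwa [det_fin_two_of])), by
    simp [act, GeneralLinearGroup.mkOfDetNeZero]⟩

theorem inv_mul_mul_mem_orbit (g h : GL (Fin 2) F) (v : M2 F × M2 F) :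
    ((g⁻¹).val * v.1 * h.val, (g⁻¹).val * v.2 * h.val) ∈ orbit v :=
  ⟨(g, h, 1), by simp [act]⟩

theorem exists_mem_orbit_det_fst_ne_zero {v : M2 F × M2 F} (hv : Pinv v ≠ 0) :
    ∃ w ∈ orbit v, w.1.det ≠ 0 := by
  by_contra! hdet
  have hx : v.1.det = 0 := hdet v ⟨1, act_one v⟩
  have hy : v.2.det = 0 := by
    simpa using hdet _ (linearCombination_mem_orbit (a := 0) (b := 1) (c := 1) (d := 0) (by simp) v)
  have hxy : (v.1 + v.2).det = 0 := by
    simpa using hdet _ (linearCombination_mem_orbit (a := 1) (b := 0) (c := 1) (d := 1) (by simp) v)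
  exact hv (by rw [Pinv_eq_det_add, hx, hy, hxy]; ring)

theorem exists_one_prod_mem_orbit {v : M2 F × M2 F} (hv : Pinv v ≠ 0) :
    ∃ y, (1, y) ∈ orbit v := by
  obtain ⟨w, hw, hdet⟩ := exists_mem_orbit_det_fst_ne_zero hv
  let g := GeneralLinearGroup.mkOfDetNeZero w.1 hdet
  refine ⟨(g⁻¹).val * w.2, mem_orbit_trans hw ?_⟩
  have hg : (g⁻¹).val * w.1 = 1 := g.inv_mul
  simpa only [Units.val_one, Matrix.mul_one, hg] using inv_mul_mul_mem_orbit g 1 w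

theorem exists_cyclic_vector {y : M2 F} (hy : y.discr ≠ 0) :
    ∃ e f : F, e * (y 1 0 * e + y 1 1 * f) - (y 0 0 * e + y 0 1 * f) * f ≠ 0 := by
  by_contra! hdep
  have h10 : y 1 0 = 0 := by simpa using hdep 1 0
  have h01 : y 0 1 = 0 := by simpa using hdep 0 1
  have hdiag : y 1 1 = y 0 0 := by simpa [h10, h01, sub_eq_zero] using hdep 1 1
  exact hy (by rw [discr_fin_two, trace_fin_two, det_fin_two, h10, h01, hdiag]; ring)

theorem exists_mul_eq_mul_companion {y : M2 F} (hy : y.discr ≠ 0) :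
    ∃ g : GL (Fin 2) F, y * g.val = g.val * !![0, -y.det; 1, y.trace] := by
  obtain ⟨e, f, hef⟩ := exists_cyclic_vector hy
  refine ⟨.mkOfDetNeZero !![e, y 0 0 * e + y 0 1 * f; f, y 1 0 * e + y 1 1 * f]
    (by rwa [det_fin_two_of]), ?_⟩
  ext i j
  fin_cases i <;> fin_cases j <;>
    simp [GeneralLinearGroup.mkOfDetNeZero, mul_apply, det_fin_two, trace_fin_two] <;> ring

theorem exists_mulTable_mem_orbit {v : M2 F × M2 F} (hv : Pinv v ≠ 0) :
    ∃ a b, mulTable (QuadraticAlgebra.basis a b) ∈ orbit v := by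
  obtain ⟨y, hy⟩ := exists_one_prod_mem_orbit hv
  have hdiscr : y.discr ≠ 0 := Pinv_one_left y ▸ Pinv_ne_zero_of_mem_orbit hy hv
  obtain ⟨g, hg⟩ := exists_mul_eq_mul_companion hdiscr
  refine ⟨-y.det, y.trace, mem_orbit_trans hy ?_⟩
  have hconj : (g⁻¹).val * y * g.val = !![0, -y.det; 1, y.trace] := by
    rw [Matrix.mul_assoc, Units.inv_mul_eq_iff_eq_mul, hg]
  have hone : (g⁻¹).val * 1 * g.val = 1 := by
    rw [Matrix.mul_one, Units.inv_mul]
  rw [mulTable_quadraticAlgebra_basis]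
  simpa only [hone, hconj] using inv_mul_mul_mem_orbit g g (1, y)

end NormalForm

section Counting

variable {F : Type*} [Field F]

theorem Pinv_mulTable_quadraticAlgebra (a b : F) :
    Pinv (mulTable (QuadraticAlgebra.basis a b)) = b ^ 2 + 4 * a := by
  rw [mulTable_quadraticAlgebra_basis, Pinv_one_left, discr_fin_two]
  simp [trace_fin_two, det_fin_two]

theorem card_stab_mulTable_quadraticAlgebra {a b : F} (hab : b ^ 2 + 4 * a ≠ 0) :
    Nat.card (stab (mulTable (QuadraticAlgebra.basis a b))) =
      2 * Nat.card (QuadraticAlgebra F a b)ˣ ^ 2 := by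
  rw [card_stab_mulTable, card_algEquiv_quadraticAlgebra hab]

theorem exists_card_stab_eq {v : M2 F × M2 F} (hv : Pinv v ≠ 0) :
    ∃ a b : F, b ^ 2 + 4 * a ≠ 0 ∧ (IsSquare (b ^ 2 + 4 * a) ↔ IsSquare (Pinv v)) ∧
      Nat.card (stab v) = 2 * Nat.card (QuadraticAlgebra F a b)ˣ ^ 2 := by
  obtain ⟨a, b, hab⟩ := exists_mulTable_mem_orbit hv
  have hne := Pinv_ne_zero_of_mem_orbit hab hv
  have hsq := isSquare_Pinv_iff_of_mem_orbit hab
  rw [Pinv_mulTable_quadraticAlgebra] at hne hsq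
  exact ⟨a, b, hne, hsq, by
    rw [← card_stab_eq_of_mem_orbit hab, card_stab_mulTable_quadraticAlgebra hne]⟩

theorem card_units_quadraticAlgebra_of_isSquare (h2 : (2 : F) ≠ 0) {a b : F}
    (hab : b ^ 2 + 4 * a ≠ 0) (hsq : IsSquare (b ^ 2 + 4 * a)) :
    Nat.card (QuadraticAlgebra F a b)ˣ = Nat.card Fˣ ^ 2 := by
  obtain ⟨c, hc⟩ := hsq
  have hc0 : c ≠ 0 := by
    rintro rfl
    exact hab (by rw [hc, mul_zero])
  obtain ⟨r, hr⟩ : ∃ r, 2 * r = b + c := ⟨(b + c) / 2, mul_div_cancel₀ _ h2⟩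
  obtain ⟨s, hs⟩ : ∃ s, 2 * s = b - c := ⟨(b - c) / 2, mul_div_cancel₀ _ h2⟩
  have hrs : r ≠ s := by
    rintro rfl
    exact mul_ne_zero h2 hc0 (by linear_combination hs - hr)
  obtain rfl : a = -(r * s) := mul_left_cancel₀ (mul_ne_zero h2 h2) <| by
    linear_combination hc + 2 * s * hr + (b + c) * hs
  obtain rfl : b = r + s := mul_left_cancel₀ h2 (by linear_combination -hr - hs)
  exact card_units_quadraticAlgebra_of_roots hrs

theorem card_units_quadraticAlgebra_of_not_isSquare [Finite F] {a b : F}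
    (hsq : ¬IsSquare (b ^ 2 + 4 * a)) :
    Nat.card (QuadraticAlgebra F a b)ˣ = Nat.card F ^ 2 - 1 :=
  card_units_quadraticAlgebra_of_forall_ne fun r hr ↦ hsq ⟨2 * r - b, by linear_combination -4 * hr⟩

theorem card_stab_of_isSquare (h2 : (2 : F) ≠ 0) {v : M2 F × M2 F} (hv : Pinv v ≠ 0)
    (hsq : IsSquare (Pinv v)) : Nat.card (stab v) = 2 * Nat.card Fˣ ^ 4 := by
  obtain ⟨a, b, hab, hiff, hcard⟩ := exists_card_stab_eq hv
  rw [hcard, card_units_quadraticAlgebra_of_isSquare h2 hab (hiff.2 hsq), ← pow_mul]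

theorem card_stab_of_not_isSquare [Finite F] {v : M2 F × M2 F} (hsq : ¬IsSquare (Pinv v)) :
    Nat.card (stab v) = 2 * (Nat.card F ^ 2 - 1) ^ 2 := by
  have hv : Pinv v ≠ 0 := fun h ↦ hsq (h ▸ .zero)
  obtain ⟨a, b, -, hiff, hcard⟩ := exists_card_stab_eq hv
  rw [hcard, card_units_quadraticAlgebra_of_not_isSquare (hiff.not.2 hsq)]

end Counting

section OrbitCounting

theorem sq_sub_one_eq_mul (n : ℕ) : n ^ 2 - 1 = (n + 1) * (n - 1) := by
  simpa only [one_pow] using Nat.sq_sub_sq n 1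

variable {F : Type*} [Field F] [Finite F]

theorem card_GL_fin_two :
    Nat.card (GL (Fin 2) F) = Nat.card F * (Nat.card F + 1) * (Nat.card F - 1) ^ 2 := by
  have := Fintype.ofFinite F
  rw [card_GL_field, Fin.prod_univ_two, Fintype.card_eq_nat_card, Fin.val_zero, Fin.val_one,
    pow_zero, pow_one, sq_sub_one_eq_mul, sq, ← Nat.mul_sub_one]
  ring

theorem two_mul_card_orbit_of_isSquare (h2 : (2 : F) ≠ 0) {v : M2 F × M2 F} (hv : Pinv v ≠ 0)
    (hsq : IsSquare (Pinv v)) :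
    2 * Nat.card (orbit v) = Nat.card F ^ 3 * (Nat.card F + 1) * (Nat.card F ^ 2 - 1) ^ 2 := by
  have hpos : 0 < Nat.card F - 1 := Nat.sub_pos_of_lt Finite.one_lt_card
  have horbit := card_orbit_mul_card_stab v
  rw [card_stab_of_isSquare h2 hv hsq, card_GL_fin_two, Nat.card_units] at horbit
  rw [sq_sub_one_eq_mul]
  refine Nat.eq_of_mul_eq_mul_left (pow_pos hpos 4) ?_
  linear_combination horbit

theorem two_mul_card_orbit_of_not_isSquare {v : M2 F × M2 F} (hsq : ¬IsSquare (Pinv v)) :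
    2 * Nat.card (orbit v) = Nat.card F ^ 3 * (Nat.card F - 1) ^ 3 * (Nat.card F ^ 2 - 1) := by
  have hpos : 0 < Nat.card F ^ 2 - 1 :=
    Nat.sub_pos_of_lt (Nat.one_lt_pow two_ne_zero Finite.one_lt_card)
  have horbit := card_orbit_mul_card_stab v
  rw [card_stab_of_not_isSquare hsq, card_GL_fin_two] at horbit
  refine Nat.eq_of_mul_eq_mul_left (pow_pos hpos 2) ?_
  rw [sq_sub_one_eq_mul] at horbit ⊢
  linear_combination horbit

theorem two_ne_zero_of_odd_card {F : Type*} [Field F] [Fintype F] (h : Odd (Fintype.card F)) :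
    (2 : F) ≠ 0 :=
  Ring.two_ne_zero fun hchar ↦
    Nat.not_even_iff_odd.2 h (Nat.even_iff.2 (FiniteField.even_card_of_char_two hchar))

end OrbitCounting

/-- over a finite field of odd cardinality `q`, a regular element whose
invariant `P` is a (nonzero) square has orbit of size `q³(q+1)(q²−1)²/2` and stabilizer of
size `2(q−1)⁴`; if `P` is a nonsquare, the orbit has size `q³(q−1)³(q²−1)/2` and the
stabilizer has size `2(q²−1)²`. -/
theorem stmt14 (F : Type*) [Field F] [Fintype F] (q : ℕ)
    (hq : Fintype.card F = q) (hodd : Odd q)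
    (v : M2 F × M2 F) (hP : Pinv v ≠ 0) :
    ((∃ c : F, c ≠ 0 ∧ Pinv v = c ^ 2) →
      2 * Nat.card (orbit v) = q ^ 3 * (q + 1) * (q ^ 2 - 1) ^ 2 ∧
        Nat.card (stab v) = 2 * (q - 1) ^ 4) ∧
    ((¬ ∃ c : F, c ≠ 0 ∧ Pinv v = c ^ 2) →
      2 * Nat.card (orbit v) = q ^ 3 * (q - 1) ^ 3 * (q ^ 2 - 1) ∧
        Nat.card (stab v) = 2 * (q ^ 2 - 1) ^ 2) := by
  subst hq
  have h2 : (2 : F) ≠ 0 := two_ne_zero_of_odd_card hodd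
  have isSquare_iff : (∃ c : F, c ≠ 0 ∧ Pinv v = c ^ 2) ↔ IsSquare (Pinv v) := by
    rw [isSquare_iff_exists_sq]
    exact exists_congr fun c ↦ and_iff_right_of_imp fun hc ↦ by
      rintro rfl
      exact hP (by rw [hc, zero_pow two_ne_zero])
  rw [isSquare_iff, Fintype.card_eq_nat_card]
  refine ⟨fun hsq ↦ ⟨two_mul_card_orbit_of_isSquare h2 hP hsq, ?_⟩,
    fun hsq ↦ ⟨two_mul_card_orbit_of_not_isSquare hsq, card_stab_of_not_isSquare hsq⟩⟩
  rw [card_stab_of_isSquare h2 hP hsq, Nat.card_units]
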